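/- arXiv:1607.03995 — 5 statements merged into one kernel-verified Lean document; each statement's English description precedes it below -/
import Mathlib

section
/- Let n ≥ 1, 0 < R₂ < R₃ < R₁, λ, ν > 0, and let f : [R₂, R₁] → ℝ be continuous with f > 0 on [R₂, R₃), f(R₃) = 0, f < 0 on (R₃, R₁], ∫_{R₂}^{R₁} f(ρ)ρ^{n−1} dρ = 0, and ∫_{R₂}^{R₁} |f(ρ)|ρ^{n−1} dρ < 2λν R₂^{n−1}√(2λ)/(3√3). Define F(r) = −(1/rⁿ)·∫_{R₂}^{r} f(ρ)ρ^{n−1} dρ. Then 0 < F(r)²r² < 8λ³ν²/27 for every r ∈ (R₂, R₁). -/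
/-!
Put `G(r) = ∫_{R₂}^r f(ρ)ρ^{n-1} dρ`, so that `|F(r)|r = |G(r)| / r^{n-1}`. As `f` changes sign
once, from plus to minus, `G` first increases and then decreases; it vanishes at both ends, so it
is positive in between. Since `∫_{R₂}^r` and `-∫_r^{R₁}` of `f(ρ)ρ^{n-1}` are both `G(r)`, one gets
`2 G(r) ≤ ∫_{R₂}^{R₁} |f(ρ)|ρ^{n-1} dρ`, and `ρ^{n-1}` is at least `R₂^{n-1}`.
-/

section

open Set MeasureTheory

variable {a b c r : ℝ}

theorem integral_pos_of_pos_of_neg_of_integral_nonneg {g : ℝ → ℝ}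
    (hg : IntervalIntegrable g volume a b)
    (hpos : ∀ x ∈ Ioo a b, x < c → 0 < g x) (hneg : ∀ x ∈ Ioo a b, c < x → g x < 0)
    (hab : 0 ≤ ∫ x in a..b, g x) (hr : r ∈ Ioo a b) : 0 < ∫ x in a..r, g x := by
  have hr' : r ∈ uIcc a b := Icc_subset_uIcc (Ioo_subset_Icc_self hr)
  have hg_left : IntervalIntegrable g volume a r := hg.mono_set (uIcc_subset_uIcc_left hr')
  have hg_right : IntervalIntegrable g volume r b := hg.mono_set (uIcc_subset_uIcc_right hr')
  rcases le_or_gt r c with hrc | hcr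
  · exact intervalIntegral.intervalIntegral_pos_of_pos_on hg_left
      (fun x hx => hpos x ⟨hx.1, hx.2.trans hr.2⟩ (hx.2.trans_le hrc)) hr.1
  · have tail_neg : 0 < ∫ x in r..b, -g x :=
      intervalIntegral.intervalIntegral_pos_of_pos_on hg_right.neg
        (fun x hx => neg_pos.2 (hneg x ⟨hr.1.trans hx.1, hx.2⟩ (hcr.trans hx.1))) hr.2
    rw [intervalIntegral.integral_neg] at tail_neg
    linarith [intervalIntegral.integral_add_adjacent_intervals hg_left hg_right]

theorem two_mul_norm_integral_le_integral_norm_of_integral_eq_zero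
    {E : Type*} [NormedAddCommGroup E] [NormedSpace ℝ E] {g : ℝ → E}
    (hg : IntervalIntegrable g volume a b) (hab : ∫ x in a..b, g x = 0) (hr : r ∈ Icc a b) :
    2 * ‖∫ x in a..r, g x‖ ≤ ∫ x in a..b, ‖g x‖ := by
  have hr' : r ∈ uIcc a b := Icc_subset_uIcc hr
  have hg_left : IntervalIntegrable g volume a r := hg.mono_set (uIcc_subset_uIcc_left hr')
  have hg_right : IntervalIntegrable g volume r b := hg.mono_set (uIcc_subset_uIcc_right hr')
  have tail_eq : ∫ x in a..r, g x = -∫ x in r..b, g x := by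
    rw [eq_neg_iff_add_eq_zero,
      intervalIntegral.integral_add_adjacent_intervals hg_left hg_right, hab]
  calc 2 * ‖∫ x in a..r, g x‖ = ‖∫ x in a..r, g x‖ + ‖∫ x in r..b, g x‖ := by
        rw [two_mul, tail_eq, norm_neg]
    _ ≤ (∫ x in a..r, ‖g x‖) + ∫ x in r..b, ‖g x‖ :=
        add_le_add (intervalIntegral.norm_integral_le_integral_norm hr.1)
          (intervalIntegral.norm_integral_le_integral_norm hr.2)
    _ = ∫ x in a..b, ‖g x‖ :=
        intervalIntegral.integral_add_adjacent_intervals hg_left.norm hg_right.norm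

theorem integral_mul_weight_div_mem_Ioo {f w : ℝ → ℝ} {M : ℝ}
    (hfw : IntervalIntegrable (fun x => f x * w x) volume a b)
    (hw : MonotoneOn w (Icc a b)) (hwa : 0 < w a)
    (hpos : ∀ x ∈ Ioo a b, x < c → 0 < f x) (hneg : ∀ x ∈ Ioo a b, c < x → f x < 0)
    (hbal : ∫ x in a..b, f x * w x = 0) (hM : ∫ x in a..b, |f x| * w x < 2 * M * w a)
    (hr : r ∈ Ioo a b) : (∫ x in a..r, f x * w x) / w r ∈ Ioo 0 M := by
  have hab : a ≤ b := (hr.1.trans hr.2).le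
  have w_ge : ∀ x ∈ Icc a b, w a ≤ w x := fun x hx => hw (left_mem_Icc.2 hab) hx hx.1
  have w_pos : ∀ x ∈ Icc a b, 0 < w x := fun x hx => hwa.trans_le (w_ge x hx)
  have hr' : r ∈ Icc a b := Ioo_subset_Icc_self hr
  have G_pos : 0 < ∫ x in a..r, f x * w x :=
    integral_pos_of_pos_of_neg_of_integral_nonneg hfw
      (fun x hx hxc => mul_pos (hpos x hx hxc) (w_pos x (Ioo_subset_Icc_self hx)))
      (fun x hx hcx => mul_neg_of_neg_of_pos (hneg x hx hcx) (w_pos x (Ioo_subset_Icc_self hx)))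
      hbal.ge hr
  have integral_norm_eq : ∫ x in a..b, ‖f x * w x‖ = ∫ x in a..b, |f x| * w x := by
    refine intervalIntegral.integral_congr fun x hx => ?_
    rw [uIcc_of_le hab] at hx
    simp only [Real.norm_eq_abs, abs_mul, abs_of_pos (w_pos x hx)]
  have G_lt : ∫ x in a..r, f x * w x < M * w a := by
    have := two_mul_norm_integral_le_integral_norm_of_integral_eq_zero hfw hbal hr'
    rw [Real.norm_of_nonneg G_pos.le, integral_norm_eq] at this
    linarith
  have M_pos : 0 < M := pos_of_mul_pos_left (G_pos.trans G_lt) hwa.le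
  refine ⟨div_pos G_pos (w_pos r hr'), (div_lt_iff₀ (w_pos r hr')).2 ?_⟩
  exact G_lt.trans_le (mul_le_mul_of_nonneg_left (w_ge r hr') M_pos.le)

end

/-- The local maximum over `s` of the stress magnitude `|ν s (s² / 2 - λ)|` derived from the
double-well energy `(ν / 2) (s² / 2 - λ)²`; it is attained at `s = √(2λ / 3)`. It is the threshold
that the stress field must stay below. -/
noncomputable def criticalStress (lam nu : ℝ) : ℝ :=
  2 * lam * nu * Real.sqrt (2 * lam) / (3 * Real.sqrt 3)

theorem criticalStress_sq {lam : ℝ} (hlam : 0 ≤ lam) (nu : ℝ) :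
    criticalStress lam nu ^ 2 = 8 * lam ^ 3 * nu ^ 2 / 27 := by
  rw [criticalStress, div_pow, mul_pow, mul_pow 3, Real.sq_sqrt (by positivity),
    Real.sq_sqrt (by positivity)]
  ring

theorem stmt_4_general {n : ℕ} (hn : 1 ≤ n) {R₁ R₂ R₃ : ℝ} (hR₂ : 0 < R₂)
    {lam nu : ℝ} (hlam : 0 < lam)
    {f : ℝ → ℝ} (hf : IntervalIntegrable f MeasureTheory.volume R₂ R₁)
    (hpos : ∀ r ∈ Set.Ioo R₂ R₁, r < R₃ → 0 < f r)
    (hneg : ∀ r ∈ Set.Ioo R₂ R₁, R₃ < r → f r < 0)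
    (hbal : (∫ ρ in R₂..R₁, f ρ * ρ ^ (n - 1)) = 0)
    (hsmall : (∫ ρ in R₂..R₁, |f ρ| * ρ ^ (n - 1)) <
      4 * lam * nu * R₂ ^ (n - 1) * Real.sqrt (2 * lam) / (3 * Real.sqrt 3))
    {F : ℝ → ℝ}
    (hF : ∀ r, F r = -(1 / r ^ n) * ∫ ρ in R₂..r, f ρ * ρ ^ (n - 1)) :
    ∀ r ∈ Set.Ioo R₂ R₁,
      0 < F r ^ 2 * r ^ 2 ∧ F r ^ 2 * r ^ 2 < 8 * lam ^ 3 * nu ^ 2 / 27 := by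
  intro r hr
  have r_pos : 0 < r := hR₂.trans hr.1
  have bound : (∫ ρ in R₂..r, f ρ * ρ ^ (n - 1)) / r ^ (n - 1) ∈
      Set.Ioo 0 (criticalStress lam nu) :=
    integral_mul_weight_div_mem_Ioo (w := fun ρ => ρ ^ (n - 1))
      (hf.mul_continuousOn (continuous_pow _).continuousOn)
      (fun x hx y _ hxy => pow_le_pow_left₀ (hR₂.le.trans hx.1) hxy _) (pow_pos hR₂ _)
      hpos hneg hbal (hsmall.trans_eq (by rw [criticalStress]; ring)) hr
  have stress_sq : F r ^ 2 * r ^ 2 =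
      ((∫ ρ in R₂..r, f ρ * ρ ^ (n - 1)) / r ^ (n - 1)) ^ 2 := by
    rw [hF, ← mul_pow_sub_one (Nat.one_le_iff_ne_zero.1 hn) r]
    field_simp
  rw [stress_sq, ← criticalStress_sq hlam.le]
  exact ⟨pow_pos bound.1 2, pow_lt_pow_left₀ bound.2 bound.1.le two_ne_zero⟩

/-- Under the sign conditions on `f`, the balance condition, and the
smallness condition `∫_{R₂}^{R₁} |f(ρ)|ρ^{n-1} dρ < 2λν R₂^{n-1}√(2λ)/(3√3)`,
the profile `F(r) = -(1/rⁿ)·∫_{R₂}^{r} f(ρ)ρ^{n-1} dρ` satisfies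
`0 < F(r)²r² < 8λ³ν²/27` for every `r ∈ (R₂, R₁)`. -/
theorem stmt_4 (n : ℕ) (hn : 1 ≤ n) (R₁ R₂ R₃ : ℝ)
    (hR₂ : 0 < R₂) (h₂₃ : R₂ < R₃) (h₃₁ : R₃ < R₁)
    (lam nu : ℝ) (hlam : 0 < lam) (hnu : 0 < nu)
    (f : ℝ → ℝ) (hf : ContinuousOn f (Set.Icc R₂ R₁))
    (hpos : ∀ r ∈ Set.Ico R₂ R₃, 0 < f r)
    (hzero : f R₃ = 0)
    (hneg : ∀ r ∈ Set.Ioc R₃ R₁, f r < 0)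
    (hbal : (∫ ρ in R₂..R₁, f ρ * ρ ^ (n - 1)) = 0)
    (hsmall : (∫ ρ in R₂..R₁, |f ρ| * ρ ^ (n - 1)) <
      2 * lam * nu * R₂ ^ (n - 1) * Real.sqrt (2 * lam) / (3 * Real.sqrt 3))
    (F : ℝ → ℝ)
    (hF : ∀ r, F r = -(1 / r ^ n) * ∫ ρ in R₂..r, f ρ * ρ ^ (n - 1)) :
    ∀ r ∈ Set.Ioo R₂ R₁,
      0 < F r ^ 2 * r ^ 2 ∧ F r ^ 2 * r ^ 2 < 8 * lam ^ 3 * nu ^ 2 / 27 := by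
  exact stmt_4_general hn hR₂ hlam (hf.intervalIntegrable_of_Icc (h₂₃.trans h₃₁).le)
    (fun r hr h => hpos r ⟨hr.1.le, h⟩) (fun r hr h => hneg r ⟨h, hr.2.le⟩) hbal
    (hsmall.trans_le (by gcongr; norm_num)) hF
end

section
/- Let λ, ν > 0, E(y) = 2y²(λ + y/ν), and let A ∈ (0, 8λ³ν²/27). Then the equation E(y) = A has exactly three real roots ζ₁, ζ₂, ζ₃, and they satisfy ζ₁ > 0 > ζ₂ > −2νλ/3 > ζ₃ > −νλ. -/
/-! `E` takes the value `0` exactly at `-νλ` and (doubly) at `0`, and its local maximum value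
`8λ³ν²/27` exactly at `νλ/3` and (doubly) at `-2νλ/3`. Hence `E - A` alternates in sign along
`-νλ < -2νλ/3 < 0 < νλ/3`, so it has a root in each of the three gaps, and a cubic has no others. -/

open Polynomial Set

theorem exists_mem_Ioo_eq_zero_of_mul_neg {α R : Type*} [ConditionallyCompleteLinearOrder α]
    [DenselyOrdered α] [TopologicalSpace α] [OrderTopology α] [Ring R] [LinearOrder R]
    [IsStrictOrderedRing R] [TopologicalSpace R] [OrderClosedTopology R] {f : α → R} {a b : α}
    (hab : a ≤ b) (hf : ContinuousOn f (Icc a b)) (hneg : f a * f b < 0) :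
    ∃ c ∈ Ioo a b, f c = 0 := by
  rcases mul_neg_iff.mp hneg with ⟨ha, hb⟩ | ⟨ha, hb⟩
  · exact intermediate_value_Ioo' hab hf ⟨hb, ha⟩
  · exact intermediate_value_Ioo hab hf ⟨ha, hb⟩

theorem strictMono_of_mem_Ioo_castSucc_succ {α : Type*} [Preorder α] {n : ℕ} {x : Fin (n + 1) → α}
    {r : Fin n → α} (hx : Monotone x) (hr : ∀ i, r i ∈ Ioo (x i.castSucc) (x i.succ)) :
    StrictMono r := fun i j hij ↦
  calc
    r i < x i.succ := (hr i).2
    _ ≤ x j.castSucc := hx (Fin.succ_le_castSucc_iff.mpr hij)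
    _ < r j := (hr j).1

theorem exists_roots_eq_map_mem_Ioo_of_eval_mul_neg {n : ℕ} {p : ℝ[X]} (hp : p ≠ 0)
    (hdeg : p.natDegree ≤ n) {x : Fin (n + 1) → ℝ} (hx : Monotone x)
    (hneg : ∀ i : Fin n, p.eval (x i.castSucc) * p.eval (x i.succ) < 0) :
    ∃ r : Fin n → ℝ, (∀ i, r i ∈ Ioo (x i.castSucc) (x i.succ)) ∧
      p.roots = Finset.univ.val.map r := by
  choose r hr hroot using fun i : Fin n ↦ exists_mem_Ioo_eq_zero_of_mul_neg
    (hx i.castSucc_le_succ) p.continuous.continuousOn (hneg i)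
  have hinj : Function.Injective r := (strictMono_of_mem_Ioo_castSucc_succ hx hr).injective
  refine ⟨r, hr, roots_eq_of_natDegree_le_card_of_ne_zero
    (S := Finset.univ.map ⟨r, hinj⟩) (by simpa using hroot) (by simpa using hdeg) hp⟩

/-- The cubic `2 y² (λ + y / ν) - A`, whose roots are the solutions of the dual algebraic
equation `E y = A`, recorded by its coefficients. -/
noncomputable def dualCubic {K : Type*} [Field K] (lam nu A : K) : Cubic K :=
  ⟨2 / nu, 2 * lam, 0, -A⟩

theorem eval_toPoly_dualCubic {K : Type*} [Field K] (lam nu A y : K) :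
    (dualCubic lam nu A).toPoly.eval y = 2 * y ^ 2 * (lam + y / nu) - A := by
  simp only [dualCubic, Cubic.toPoly, eval_add, eval_mul, eval_C, eval_pow, eval_X]
  ring

/-- The points between which the three roots of `E y = A` are separated: the zeros `-νλ`, `0` of `E`
(even indices) interlaced with the points `-2νλ/3`, `νλ/3` where `E = 8λ³ν²/27` (odd indices). -/
noncomputable def dualNodes (lam nu : ℝ) : Fin 4 → ℝ :=
  ![-nu * lam, -2 * nu * lam / 3, 0, nu * lam / 3]

theorem monotone_dualNodes {lam nu : ℝ} (h : 0 ≤ nu * lam) : Monotone (dualNodes lam nu) := by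
  refine Fin.monotone_iff_le_succ.mpr fun i ↦ ?_
  fin_cases i <;> dsimp [dualNodes] <;> linarith

theorem eval_toPoly_dualCubic_dualNodes {nu : ℝ} (hnu : nu ≠ 0) (lam A : ℝ) (i : Fin 4) :
    (dualCubic lam nu A).toPoly.eval (dualNodes lam nu i) =
      ![-A, 8 * lam ^ 3 * nu ^ 2 / 27 - A, -A, 8 * lam ^ 3 * nu ^ 2 / 27 - A] i := by
  rw [eval_toPoly_dualCubic]
  fin_cases i <;> dsimp [dualNodes] <;> field_simp <;> ring

theorem eval_toPoly_dualCubic_mul_neg {lam nu A : ℝ} (hnu : nu ≠ 0)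
    (hA : A ∈ Ioo 0 (8 * lam ^ 3 * nu ^ 2 / 27)) (i : Fin 3) :
    (dualCubic lam nu A).toPoly.eval (dualNodes lam nu i.castSucc) *
      (dualCubic lam nu A).toPoly.eval (dualNodes lam nu i.succ) < 0 := by
  have hlow : -A < 0 := neg_lt_zero.mpr hA.1
  have hhigh : 0 < 8 * lam ^ 3 * nu ^ 2 / 27 - A := sub_pos.mpr hA.2
  simp only [eval_toPoly_dualCubic_dualNodes hnu]
  fin_cases i
  · exact mul_neg_of_neg_of_pos hlow hhigh
  · exact mul_neg_of_pos_of_neg hhigh hlow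
  · exact mul_neg_of_neg_of_pos hlow hhigh

/-- For `λ, ν > 0`, `E y = 2y²(λ + y/ν)` and `A ∈ (0, 8λ³ν²/27)`,
the equation `E y = A` has exactly three real roots `ζ₁ > 0 > ζ₂ > -2νλ/3 > ζ₃ > -νλ`. -/
theorem stmt_6 (lam nu : ℝ) (hlam : 0 < lam) (hnu : 0 < nu)
    (E : ℝ → ℝ) (hE : ∀ y, E y = 2 * y ^ 2 * (lam + y / nu))
    (A : ℝ) (hA : A ∈ Set.Ioo 0 (8 * lam ^ 3 * nu ^ 2 / 27)) :
    ∃ ζ₁ ζ₂ ζ₃ : ℝ,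
      E ζ₁ = A ∧ E ζ₂ = A ∧ E ζ₃ = A ∧
      ζ₁ > 0 ∧ 0 > ζ₂ ∧ ζ₂ > -2 * nu * lam / 3 ∧
      -2 * nu * lam / 3 > ζ₃ ∧ ζ₃ > -nu * lam ∧
      (∀ y : ℝ, E y = A → y = ζ₁ ∨ y = ζ₂ ∨ y = ζ₃) := by
  have hlead : (dualCubic lam nu A).a ≠ 0 := div_ne_zero two_ne_zero hnu.ne'
  have hne : (dualCubic lam nu A).toPoly ≠ 0 := Cubic.ne_zero_of_a_ne_zero hlead
  obtain ⟨r, hr, hroots⟩ := exists_roots_eq_map_mem_Ioo_of_eval_mul_neg hne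
    (Cubic.natDegree_of_a_ne_zero hlead).le (monotone_dualNodes (mul_pos hnu hlam).le)
    (eval_toPoly_dualCubic_mul_neg hnu.ne' hA)
  have hmem (y : ℝ) : E y = A ↔ ∃ i, r i = y := by
    rw [hE, ← sub_eq_zero, ← eval_toPoly_dualCubic, ← IsRoot.def, ← mem_roots hne, hroots]
    simp only [Multiset.mem_map, Finset.mem_val, Finset.mem_univ, true_and]
  obtain ⟨hζ₃, hζ₃'⟩ := hr 0
  obtain ⟨hζ₂, hζ₂'⟩ := hr 1
  refine ⟨r 2, r 1, r 0, (hmem _).2 ⟨2, rfl⟩, (hmem _).2 ⟨1, rfl⟩, (hmem _).2 ⟨0, rfl⟩,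
    (hr 2).1, hζ₂', hζ₂, hζ₃', hζ₃, fun y hy ↦ ?_⟩
  obtain ⟨i, rfl⟩ := (hmem y).1 hy
  fin_cases i <;> simp
end

section
/- Let λ, ν > 0, E(y) = 2y²(λ + y/ν), and let A > 8λ³ν²/27. Then the equation E(y) = A has exactly one real root, and this root is positive. -/
/-!
In the variable `x = y / ν` the equation `E y = A` reads `x² (λ + x) = b` with `b = A / (2ν²)`, and
the bound on `A` becomes `4λ³ < 27b`. The factorization
`4λ³ - 27x²(λ + x) = (3x + 2λ)² (λ - 3x)`, whose double root is the critical point of the cubic,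
forces `λ < 3x` at every root. Since `b > 0` also forces `0 < λ + x`, adding the two gives
`0 < 4x`. Every root thus lies where both factors of `x² (λ + x)` are positive and increasing, so
there is at most one; existence is the intermediate value theorem.
-/

open Filter

section OrderedRing

variable {R : Type*} [CommRing R] [LinearOrder R] [IsStrictOrderedRing R] {a x : R}

theorem lt_three_mul_of_four_mul_cube_lt (h : 4 * a ^ 3 < 27 * (x ^ 2 * (a + x))) :
    a < 3 * x := by
  have factorization :
      4 * a ^ 3 - 27 * (x ^ 2 * (a + x)) = (3 * x + 2 * a) ^ 2 * (a - 3 * x) := by ring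
  have product_neg : (3 * x + 2 * a) ^ 2 * (a - 3 * x) < 0 :=
    factorization ▸ sub_neg_of_lt h
  exact sub_neg.mp (neg_of_mul_neg_right product_neg (sq_nonneg _))

theorem add_pos_of_sq_mul_add_pos (h : 0 < x ^ 2 * (a + x)) : 0 < a + x :=
  pos_of_mul_pos_right h (sq_nonneg x)

theorem pos_of_sq_mul_add_pos_of_four_mul_cube_lt (hpos : 0 < x ^ 2 * (a + x))
    (h : 4 * a ^ 3 < 27 * (x ^ 2 * (a + x))) : 0 < x := by
  have := lt_three_mul_of_four_mul_cube_lt h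
  have := add_pos_of_sq_mul_add_pos hpos
  linarith

theorem strictMonoOn_sq_mul_add (a : R) :
    StrictMonoOn (fun x ↦ x ^ 2 * (a + x)) {x | 0 ≤ x ∧ 0 ≤ a + x} :=
  fun _ ⟨hx, hax⟩ _ _ hxy ↦
    mul_lt_mul'' (pow_lt_pow_left₀ hxy hx two_ne_zero) (by gcongr) (sq_nonneg _) hax

end OrderedRing

theorem surjective_sq_mul_add (a : ℝ) : Function.Surjective fun x ↦ x ^ 2 * (a + x) := by
  refine Continuous.surjective (by fun_prop) ?_ ?_
  · exact (tendsto_pow_atTop two_ne_zero).atTop_mul_atTop₀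
      (tendsto_atTop_add_const_left _ a tendsto_id)
  · simp only [pow_two]
    exact (tendsto_id.atBot_mul_atBot₀ tendsto_id).atTop_mul_atBot₀
      (tendsto_atBot_add_const_left _ a tendsto_id)

theorem existsUnique_sq_mul_add_eq {a b : ℝ} (hb : 0 < b) (hab : 4 * a ^ 3 < 27 * b) :
    ∃! x, x ^ 2 * (a + x) = b := by
  have root_mem {x : ℝ} (hx : x ^ 2 * (a + x) = b) : 0 ≤ x ∧ 0 ≤ a + x := by
    subst hx
    exact ⟨(pos_of_sq_mul_add_pos_of_four_mul_cube_lt hb hab).le,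
      (add_pos_of_sq_mul_add_pos hb).le⟩
  obtain ⟨x, hx⟩ := surjective_sq_mul_add a b
  exact ⟨x, hx, fun z hz ↦
    (strictMonoOn_sq_mul_add a).injOn (root_mem hz) (root_mem hx) (hz.trans hx.symm)⟩

theorem stmt_8_general (lam nu : ℝ) (hnu : nu ≠ 0)
    (E : ℝ → ℝ) (hE : ∀ y, E y = 2 * y ^ 2 * (lam + y / nu))
    (A : ℝ) (hA_pos : 0 < A) (hA : 8 * lam ^ 3 * nu ^ 2 / 27 < A) :
    ∃ y : ℝ, E y = A ∧ 0 < y / nu ∧ ∀ z : ℝ, E z = A → z = y := by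
  set b := A / (2 * nu ^ 2) with hb_def
  have hb : 0 < b := by positivity
  have hlam : 4 * lam ^ 3 < 27 * b := by
    rw [hb_def, mul_div_assoc', lt_div_iff₀ (by positivity)]
    linarith
  have rescale (y : ℝ) : E y = A ↔ (y / nu) ^ 2 * (lam + y / nu) = b := by
    rw [hE, hb_def, eq_div_iff (by positivity)]
    field_simp
  obtain ⟨x, hx, x_unique⟩ := existsUnique_sq_mul_add_eq hb hlam
  have hx_pos : 0 < x :=
    pos_of_sq_mul_add_pos_of_four_mul_cube_lt (hx ▸ hb) (hx ▸ hlam)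
  have hx_div : x * nu / nu = x := mul_div_cancel_right₀ x hnu
  refine ⟨x * nu, (rescale _).mpr (hx_div.symm ▸ hx), hx_div.symm ▸ hx_pos, fun z hz ↦ ?_⟩
  exact (div_eq_iff hnu).mp (x_unique _ ((rescale z).mp hz))

/-- For `λ, ν > 0`, `E y = 2y²(λ + y/ν)` and `A > 8λ³ν²/27`,
the equation `E y = A` has exactly one real root, and this root is positive. -/
theorem stmt_8 (lam nu : ℝ) (hlam : 0 < lam) (hnu : 0 < nu)
    (E : ℝ → ℝ) (hE : ∀ y, E y = 2 * y ^ 2 * (lam + y / nu))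
    (A : ℝ) (hA : 8 * lam ^ 3 * nu ^ 2 / 27 < A) :
    ∃ y : ℝ, E y = A ∧ 0 < y ∧ ∀ z : ℝ, E z = A → z = y := by
  simpa only [div_pos_iff_of_pos_right hnu] using
    stmt_8_general lam nu hnu.ne' E hE A (lt_trans (by positivity) hA) hA
end

section
/- Let n ≥ 1, 0 < R₂ < R₁, λ, ν > 0, f : [R₂, R₁] → ℝ continuous with G(r) := ∫_{R₂}^{r} f(ρ)ρ^{n−1} dρ satisfying G(R₁) = 0. Define F(r) = −G(r)/rⁿ. Let ζ : [R₂, R₁] → ℝ be continuous with ζ(r) ≠ 0 and 2ζ(r)²(λ + ζ(r)/ν) = F(r)²r² for all r, and let u : [R₂, R₁] → ℝ be given by u(r) = C + ∫_{R₂}^{r} F(ρ)ρ/ζ(ρ) dρ. Then ∫_{R₂}^{R₁} [ (ν/2)(u′(r)²/2 − λ)² − f(r)u(r) ] r^{n−1} dr = −(1/2)∫_{R₂}^{R₁} [ F(r)²r²/ζ(r) + 2λζ(r) + ζ(r)²/ν ] r^{n−1} dr; that is, the total potential energy I[u] equals the pure complementary energy I_d[ζ] (no duality gap). -/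
/-!
The weight `r ^ (n - 1)` and the load `f` accumulate to `G`, and the stress `σ(r) = F(r) r` balances
it: `σ(r) r ^ (n - 1) = -G(r)`. Since `u' = σ / ζ`, the dual algebraic equation says that `ζ` is the
slope of `ξ ↦ ν ξ² / 2` at `ξ = u'² / 2 - λ`, so the Fenchel equality expresses the elastic energy
density as `σ u'` minus half of the complementary density. The remaining term `σ u' - f u`, weighted
by `r ^ (n - 1)`, is `-(G u)'`, which integrates to zero because `G` vanishes at both ends.
-/

open Set intervalIntegral
open scoped Interval Topology

section Primitive

variable {E : Type*} [NormedAddCommGroup E] [NormedSpace ℝ E] {g : ℝ → E} {a b : ℝ}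

theorem continuousOn_integral_of_continuousOn (hg : ContinuousOn g [[a, b]]) :
    ContinuousOn (fun x ↦ ∫ t in a..x, g t) [[a, b]] :=
  continuousOn_primitive_interval' hg.intervalIntegrable left_mem_uIcc

theorem hasDerivAt_integral_of_continuousOn [CompleteSpace E] (hg : ContinuousOn g [[a, b]])
    {r : ℝ} (hr : r ∈ uIoo a b) : HasDerivAt (fun x ↦ ∫ t in a..x, g t) (g r) r := by
  have hmem : [[a, b]] ∈ 𝓝 r := Icc_mem_nhds hr.1 hr.2
  have hsub : [[a, r]] ⊆ [[a, b]] := uIcc_subset_uIcc_left (uIoo_subset_uIcc_self hr)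
  exact integral_hasDerivAt_right (hg.mono hsub).intervalIntegrable
    ⟨_, hmem, hg.aestronglyMeasurable measurableSet_uIcc⟩ (hg.continuousAt hmem)

end Primitive

section Duality

/-- The double-well stored energy density `H(γ) = (ν / 2) (γ² / 2 - λ)²` at strain `γ`. -/
noncomputable def doubleWell (lam nu γ : ℝ) : ℝ :=
  nu / 2 * (γ ^ 2 / 2 - lam) ^ 2

/-- The integrand `σ² / ζ + 2 λ ζ + ζ² / ν` of the Gao–Strang complementary energy of a stress `σ`
and a dual variable `ζ`, without the factor `-1 / 2`. It is only meaningful for `ζ ≠ 0`. -/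
noncomputable def complementaryDensity (lam nu σ ζ : ℝ) : ℝ :=
  σ ^ 2 / ζ + 2 * lam * ζ + ζ ^ 2 / nu

/-- The total potential energy of the displacement `u` under the load `f` on the interval from `a`
to `b` with length weight `w`; the weight `r ^ (n - 1)` gives radial functions on an annulus in
`ℝⁿ`, up to the area of the unit sphere. -/
noncomputable def totalEnergy (lam nu : ℝ) (w f u : ℝ → ℝ) (a b : ℝ) : ℝ :=
  ∫ r in a..b, (doubleWell lam nu (deriv u r) - f r * u r) * w r

/-- The Gao–Strang pure complementary energy of the dual variable `ζ` and the stress `σ`, with the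
same weight convention as `totalEnergy`. -/
noncomputable def complementaryEnergy (lam nu : ℝ) (w σ ζ : ℝ → ℝ) (a b : ℝ) : ℝ :=
  -(1 / 2) * ∫ r in a..b, complementaryDensity lam nu (σ r) (ζ r) * w r

theorem doubleWell_div_eq_sub_complementaryDensity {lam nu σ ζ : ℝ} (hnu : nu ≠ 0) (hζ : ζ ≠ 0)
    (hdual : 2 * ζ ^ 2 * (lam + ζ / nu) = σ ^ 2) :
    doubleWell lam nu (σ / ζ) = σ * (σ / ζ) - 1 / 2 * complementaryDensity lam nu σ ζ := by
  have hstrain : (σ / ζ) ^ 2 = 2 * (lam + ζ / nu) := by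
    rw [div_pow, ← hdual]
    field_simp
  have hwork : σ ^ 2 / ζ = 2 * ζ * (lam + ζ / nu) := by
    rw [← hdual]
    field_simp
  rw [doubleWell, complementaryDensity, hstrain, mul_div_assoc', ← sq, hwork]
  field_simp
  ring

variable {lam nu a b : ℝ} {w f G σ ζ u : ℝ → ℝ}

theorem continuousOn_complementaryDensity {s : Set ℝ} (hσ : ContinuousOn σ s)
    (hζ : ContinuousOn ζ s) (hζ0 : ∀ r ∈ s, ζ r ≠ 0) :
    ContinuousOn (fun r ↦ complementaryDensity lam nu (σ r) (ζ r)) s :=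
  (((hσ.pow 2).div hζ hζ0).add (continuousOn_const.mul hζ)).add ((hζ.pow 2).div_const nu)

theorem totalEnergy_eq_complementaryEnergy (hnu : nu ≠ 0)
    (hw : ContinuousOn w [[a, b]]) (hf : ContinuousOn f [[a, b]])
    (hσ : ContinuousOn σ [[a, b]]) (hζ : ContinuousOn ζ [[a, b]]) (hu : ContinuousOn u [[a, b]])
    (hζ0 : ∀ r ∈ [[a, b]], ζ r ≠ 0)
    (hG' : ∀ r ∈ uIoo a b, HasDerivAt G (f r * w r) r) (hGa : G a = 0) (hGb : G b = 0)
    (hequilibrium : ∀ r ∈ [[a, b]], G r = -(σ r * w r))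
    (hdual : ∀ r ∈ [[a, b]], 2 * ζ r ^ 2 * (lam + ζ r / nu) = σ r ^ 2)
    (hu' : ∀ r ∈ uIoo a b, HasDerivAt u (σ r / ζ r) r) :
    totalEnergy lam nu w f u a b = complementaryEnergy lam nu w σ ζ a b := by
  have hG : ContinuousOn G [[a, b]] := (hσ.mul hw).neg.congr hequilibrium
  have hload : ContinuousOn (fun r ↦ f r * w r) [[a, b]] := hf.mul hw
  have hstrain : ContinuousOn (fun r ↦ σ r / ζ r) [[a, b]] := hσ.div hζ hζ0
  have hparts : ∫ r in a..b, (f r * w r * u r + G r * (σ r / ζ r)) = 0 := by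
    rw [integral_deriv_mul_eq_sub_of_hasDerivAt hG hu hG' hu' hload.intervalIntegrable
      hstrain.intervalIntegrable, hGa, hGb, zero_mul, zero_mul, sub_zero]
  have hdensity : (uIoo a b).EqOn
      (fun r ↦ (doubleWell lam nu (deriv u r) - f r * u r) * w r)
      (fun r ↦ -(1 / 2) * (complementaryDensity lam nu (σ r) (ζ r) * w r) -
        (f r * w r * u r + G r * (σ r / ζ r))) := by
    intro r hr
    have hr' := uIoo_subset_uIcc_self hr
    simp only [(hu' r hr).deriv, hequilibrium r hr',
      doubleWell_div_eq_sub_complementaryDensity hnu (hζ0 r hr') (hdual r hr')]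
    ring
  rw [totalEnergy, complementaryEnergy, integral_congr_uIoo hdensity, integral_sub, hparts,
    sub_zero, integral_const_mul]
  · exact (((continuousOn_complementaryDensity hσ hζ hζ0).mul hw).const_mul _).intervalIntegrable
  · exact ((hload.mul hu).add (hG.mul hstrain)).intervalIntegrable

end Duality

theorem stmt_12_general (n : ℕ) (hn : 1 ≤ n) (R₁ R₂ : ℝ) (hR₂ : 0 < R₂) (hR : R₂ ≤ R₁)
    (lam nu : ℝ) (hnu : nu ≠ 0)
    (f : ℝ → ℝ) (hf : ContinuousOn f (Icc R₂ R₁))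
    (G : ℝ → ℝ) (hG : ∀ r, G r = ∫ ρ in R₂..r, f ρ * ρ ^ (n - 1)) (hG₁ : G R₁ = 0)
    (F : ℝ → ℝ) (hF : ∀ r, F r = -G r / r ^ n)
    (ζ : ℝ → ℝ) (hζc : ContinuousOn ζ (Icc R₂ R₁)) (hζ0 : ∀ r ∈ Icc R₂ R₁, ζ r ≠ 0)
    (hdae : ∀ r ∈ Icc R₂ R₁, 2 * ζ r ^ 2 * (lam + ζ r / nu) = F r ^ 2 * r ^ 2)
    (C : ℝ) (u : ℝ → ℝ) (hu : ∀ r, u r = C + ∫ ρ in R₂..r, F ρ * ρ / ζ ρ) :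
    totalEnergy lam nu (fun r ↦ r ^ (n - 1)) f u R₂ R₁ =
      complementaryEnergy lam nu (fun r ↦ r ^ (n - 1)) (fun r ↦ F r * r) ζ R₂ R₁ := by
  rw [← uIcc_of_le hR] at hf hζc hζ0 hdae
  have hr0 : ∀ r ∈ [[R₂, R₁]], r ≠ 0 := fun r hr ↦ (hR₂.trans_le (uIcc_of_le hR ▸ hr).1).ne'
  have hload : ContinuousOn (fun r ↦ f r * r ^ (n - 1)) [[R₂, R₁]] := by fun_prop
  have hσ : ContinuousOn (fun r ↦ F r * r) [[R₂, R₁]] := by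
    have hGc := continuousOn_integral_of_continuousOn hload
    simp only [hF, hG]
    exact (hGc.neg.div (by fun_prop) fun r hr ↦ pow_ne_zero n (hr0 r hr)).mul continuousOn_id
  have hstrain : ContinuousOn (fun r ↦ F r * r / ζ r) [[R₂, R₁]] := hσ.div hζc hζ0
  refine totalEnergy_eq_complementaryEnergy hnu (by fun_prop) hf hσ hζc ?_ hζ0
    (G := G) ?_ ?_ hG₁ ?_ (by simpa only [mul_pow] using hdae) ?_
  · exact funext hu ▸ continuousOn_const.add (continuousOn_integral_of_continuousOn hstrain)
  · exact fun r hr ↦ funext hG ▸ hasDerivAt_integral_of_continuousOn hload hr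
  · rw [hG, integral_same]
  · intro r hr
    have := hr0 r hr
    rw [mul_assoc, mul_pow_sub_one (Nat.one_le_iff_ne_zero.mp hn), hF]
    field_simp
  · exact fun r hr ↦ funext hu ▸ (hasDerivAt_integral_of_continuousOn hstrain hr).const_add C

/-- No duality gap: with `F(r) = -G(r)/rⁿ`, `G(R₁) = 0`, a continuous
nonvanishing solution `ζ` of the dual algebraic equation `2ζ(r)²(λ + ζ(r)/ν) = F(r)²r²`,
and `u(r) = C + ∫_{R₂}^{r} F(ρ)ρ/ζ(ρ) dρ`, the (radial) total potential energy `I[u]`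
equals the pure complementary energy `I_d[ζ]`. -/
theorem stmt_12 (n : ℕ) (hn : 1 ≤ n) (R₁ R₂ : ℝ) (hR₂ : 0 < R₂) (hR : R₂ < R₁)
    (lam nu : ℝ) (hlam : 0 < lam) (hnu : 0 < nu)
    (f : ℝ → ℝ) (hf : ContinuousOn f (Set.Icc R₂ R₁))
    (G : ℝ → ℝ) (hG : ∀ r, G r = ∫ ρ in R₂..r, f ρ * ρ ^ (n - 1))
    (hG₁ : G R₁ = 0)
    (F : ℝ → ℝ) (hF : ∀ r, F r = -G r / r ^ n)
    (ζ : ℝ → ℝ) (hζc : ContinuousOn ζ (Set.Icc R₂ R₁))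
    (hζ0 : ∀ r ∈ Set.Icc R₂ R₁, ζ r ≠ 0)
    (hdae : ∀ r ∈ Set.Icc R₂ R₁, 2 * ζ r ^ 2 * (lam + ζ r / nu) = F r ^ 2 * r ^ 2)
    (C : ℝ) (u : ℝ → ℝ)
    (hu : ∀ r, u r = C + ∫ ρ in R₂..r, F ρ * ρ / ζ ρ) :
    (∫ r in R₂..R₁,
        ((nu / 2) * ((deriv u r) ^ 2 / 2 - lam) ^ 2 - f r * u r) * r ^ (n - 1)) =
      -(1 / 2) * ∫ r in R₂..R₁,
        (F r ^ 2 * r ^ 2 / ζ r + 2 * lam * ζ r + ζ r ^ 2 / nu) * r ^ (n - 1) := by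
  simpa only [totalEnergy, complementaryEnergy, doubleWell, complementaryDensity, mul_pow] using
    stmt_12_general n hn R₁ R₂ hR₂ hR.le lam nu hnu.ne' f hf G hG hG₁ F hF ζ hζc hζ0 hdae C u hu
end

section
/- Let n ≥ 1, 0 < R₂ < R₁, λ, ν > 0, f : [R₂, R₁] → ℝ continuous, F(r) = −(1/rⁿ)·∫_{R₂}^{r} f(ρ)ρ^{n−1} dρ, and let ζ : [R₂, R₁] → ℝ be continuous with ζ(r) ≠ 0 and 2ζ(r)²(λ + ζ(r)/ν) = F(r)²r² for all r. Define u(r) = C + ∫_{R₂}^{r} F(ρ)ρ/ζ(ρ) dρ. Then for every r ∈ (R₂, R₁), the function r ↦ r^{n−1}·ν(u′(r)²/2 − λ)·u′(r) equals −G(r) where G(r) = ∫_{R₂}^{r} f(ρ)ρ^{n−1} dρ, and hence it is differentiable with d/dr [ r^{n−1}·ν(u′(r)²/2 − λ)u′(r) ] + f(r)r^{n−1} = 0; i.e., u solves the radial Euler–Lagrange equation of the functional I. -/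
/-!
Let `H(γ) = (ν/2)(γ²/2 - λ)²`, so `H'(γ) = ν(γ²/2 - λ)γ`, and call `ζ = ν(γ²/2 - λ)` the variable
dual to the strain `γ`. Prescribing the stress `σ = H'(γ) = ζγ` forces `γ = σ/ζ` when `ζ ≠ 0`, and
eliminating `γ` leaves the cubic `2ζ²(λ + ζ/ν) = σ²`. Conversely every nonzero root `ζ` of this
cubic returns a strain `σ/ζ` whose stress is `σ`. The choice `σ(r) = F(r)r = -G(r)/rⁿ⁻¹` integrates
the radial equation `(rⁿ⁻¹σ)' = -f rⁿ⁻¹` once, and `u` is then a primitive of the strain `σ/ζ`.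
-/

open MeasureTheory Set Filter Topology

section Primitive

variable {E : Type*} [NormedAddCommGroup E] [NormedSpace ℝ E] {g : ℝ → E} {a b r : ℝ}

theorem hasDerivAt_integral_of_mem_Ioo [CompleteSpace E] (hg : IntervalIntegrable g volume a b)
    (hr : r ∈ Ioo a b) (hgr : ContinuousAt g r) :
    HasDerivAt (fun s => ∫ t in a..s, g t) (g r) r :=
  have hsub : uIcc a r ⊆ uIcc a b :=
    uIcc_subset_uIcc_left (Icc_subset_uIcc (Ioo_subset_Icc_self hr))
  intervalIntegral.integral_hasDerivAt_right (hg.mono_set hsub)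
    ⟨Ioc a b, Ioc_mem_nhds hr.1 hr.2, hg.aestronglyMeasurable⟩ hgr

theorem hasDerivAt_const_add_integral_of_continuousOn [CompleteSpace E]
    (hg : ContinuousOn g (Icc a b)) (hr : r ∈ Ioo a b) (C : E) :
    HasDerivAt (fun s => C + ∫ t in a..s, g t) (g r) r :=
  (hasDerivAt_integral_of_mem_Ioo (hg.intervalIntegrable_of_Icc (hr.1.trans hr.2).le) hr
    (hg.continuousAt (Icc_mem_nhds hr.1 hr.2))).const_add C

theorem continuousOn_integral_Icc (hg : IntervalIntegrable g volume a b) :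
    ContinuousOn (fun s => ∫ t in a..s, g t) (Icc a b) :=
  (intervalIntegral.continuousOn_primitive_interval' hg left_mem_uIcc).mono Icc_subset_uIcc

end Primitive

section DoubleWell

variable {lam nu ζ σ : ℝ}

theorem doubleWell_dual_eq (hnu : nu ≠ 0) (hζ : ζ ≠ 0)
    (hdual : 2 * ζ ^ 2 * (lam + ζ / nu) = σ ^ 2) :
    nu * ((σ / ζ) ^ 2 / 2 - lam) = ζ := by
  have hstrain : (σ / ζ) ^ 2 = 2 * (lam + ζ / nu) := by
    rw [div_pow, ← hdual]
    field_simp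
  rw [hstrain]
  field_simp
  ring

theorem doubleWell_stress_eq (hnu : nu ≠ 0) (hζ : ζ ≠ 0)
    (hdual : 2 * ζ ^ 2 * (lam + ζ / nu) = σ ^ 2) :
    nu * ((σ / ζ) ^ 2 / 2 - lam) * (σ / ζ) = σ := by
  rw [doubleWell_dual_eq hnu hζ hdual, mul_div_cancel₀ σ hζ]

end DoubleWell

theorem pow_pred_mul_neg_one_div_pow_mul_self {K : Type*} [Field K] {n : ℕ} (hn : 1 ≤ n) {r : K}
    (hr : r ≠ 0) (c : K) : r ^ (n - 1) * (-(1 / r ^ n) * c * r) = -c := by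
  have hpow : r ^ n = r ^ (n - 1) * r := (pow_sub_one_mul (Nat.one_le_iff_ne_zero.mp hn) r).symm
  rw [hpow]
  field_simp

theorem continuousOn_neg_one_div_pow_mul_integral {a b : ℝ} (ha : 0 < a) {g : ℝ → ℝ}
    (hg : IntervalIntegrable g volume a b) (n : ℕ) :
    ContinuousOn (fun r => -(1 / r ^ n) * ∫ t in a..r, g t) (Icc a b) :=
  have hpow : ∀ r ∈ Icc a b, r ^ n ≠ 0 := fun _ hr => pow_ne_zero n (ha.trans_le hr.1).ne'
  (continuousOn_const.div (continuousOn_pow n) hpow).neg.mul (continuousOn_integral_Icc hg)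

theorem stmt_19_general (n : ℕ) (hn : 1 ≤ n) (R₁ R₂ : ℝ) (hR₂ : 0 < R₂)
    (lam nu : ℝ) (hnu : nu ≠ 0)
    (f : ℝ → ℝ) (hf : IntervalIntegrable f volume R₂ R₁)
    (F : ℝ → ℝ)
    (hF : ∀ r, F r = -(1 / r ^ n) * ∫ ρ in R₂..r, f ρ * ρ ^ (n - 1))
    (ζ : ℝ → ℝ) (hζc : ContinuousOn ζ (Icc R₂ R₁))
    (hζ0 : ∀ r ∈ Icc R₂ R₁, ζ r ≠ 0)
    (hdae : ∀ r ∈ Icc R₂ R₁, 2 * ζ r ^ 2 * (lam + ζ r / nu) = F r ^ 2 * r ^ 2)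
    (C : ℝ) (u : ℝ → ℝ)
    (hu : ∀ r, u r = C + ∫ ρ in R₂..r, F ρ * ρ / ζ ρ)
    (G : ℝ → ℝ) (hG : ∀ r, G r = ∫ ρ in R₂..r, f ρ * ρ ^ (n - 1)) :
    ∀ r ∈ Ioo R₂ R₁,
      r ^ (n - 1) * (nu * ((deriv u r) ^ 2 / 2 - lam) * deriv u r) = -G r ∧
      (ContinuousAt f r →
        HasDerivAt (fun s => s ^ (n - 1) * (nu * ((deriv u s) ^ 2 / 2 - lam) * deriv u s))
          (-(f r * r ^ (n - 1))) r) := by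
  have hload : IntervalIntegrable (fun ρ => f ρ * ρ ^ (n - 1)) volume R₂ R₁ :=
    hf.mul_continuousOn (continuousOn_pow (n - 1))
  have hFc : ContinuousOn F (Icc R₂ R₁) :=
    (continuousOn_neg_one_div_pow_mul_integral hR₂ hload n).congr fun r _ => hF r
  have hstrain : ContinuousOn (fun ρ => F ρ * ρ / ζ ρ) (Icc R₂ R₁) :=
    (hFc.mul continuousOn_id).div hζc hζ0
  have hu' : ∀ r ∈ Ioo R₂ R₁, deriv u r = F r * r / ζ r := fun r hr => by
    rw [funext hu, (hasDerivAt_const_add_integral_of_continuousOn hstrain hr C).deriv]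
  have hstress : ∀ r ∈ Ioo R₂ R₁,
      r ^ (n - 1) * (nu * ((deriv u r) ^ 2 / 2 - lam) * deriv u r) = -G r := fun r hr => by
    have hr' : r ∈ Icc R₂ R₁ := Ioo_subset_Icc_self hr
    have hdual := (hdae r hr').trans (mul_pow (F r) r 2).symm
    rw [hu' r hr, doubleWell_stress_eq hnu (hζ0 r hr') hdual, hF, hG,
      pow_pred_mul_neg_one_div_pow_mul_self hn (hR₂.trans hr.1).ne']
  refine fun r hr => ⟨hstress r hr, fun hfr => ?_⟩
  have hG' : HasDerivAt G (f r * r ^ (n - 1)) r := by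
    rw [funext hG]
    exact hasDerivAt_integral_of_mem_Ioo hload hr (hfr.mul (continuousAt_pow r (n - 1)))
  exact hG'.neg.congr_of_eventuallyEq (eventually_of_mem (Ioo_mem_nhds hr.1 hr.2) hstress)

/-- With `F(r) = -(1/rⁿ)·∫_{R₂}^{r} f(ρ)ρ^{n-1} dρ`, a continuous
nonvanishing root branch `ζ` of the dual algebraic equation and
`u(r) = C + ∫_{R₂}^{r} F(ρ)ρ/ζ(ρ) dρ`, the radial stress
`r^{n-1}·ν(u′(r)²/2 - λ)·u′(r)` equals `-G(r)` on `(R₂, R₁)` and satisfies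
`d/dr[r^{n-1}·ν(u′(r)²/2 - λ)u′(r)] + f(r)r^{n-1} = 0`, i.e. `u` solves the
radial Euler–Lagrange equation. -/
theorem stmt_19 (n : ℕ) (hn : 1 ≤ n) (R₁ R₂ : ℝ) (hR₂ : 0 < R₂) (hR : R₂ < R₁)
    (lam nu : ℝ) (hlam : 0 < lam) (hnu : 0 < nu)
    (f : ℝ → ℝ) (hf : ContinuousOn f (Set.Icc R₂ R₁))
    (F : ℝ → ℝ)
    (hF : ∀ r, F r = -(1 / r ^ n) * ∫ ρ in R₂..r, f ρ * ρ ^ (n - 1))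
    (ζ : ℝ → ℝ) (hζc : ContinuousOn ζ (Set.Icc R₂ R₁))
    (hζ0 : ∀ r ∈ Set.Icc R₂ R₁, ζ r ≠ 0)
    (hdae : ∀ r ∈ Set.Icc R₂ R₁, 2 * ζ r ^ 2 * (lam + ζ r / nu) = F r ^ 2 * r ^ 2)
    (C : ℝ) (u : ℝ → ℝ)
    (hu : ∀ r, u r = C + ∫ ρ in R₂..r, F ρ * ρ / ζ ρ)
    (G : ℝ → ℝ) (hG : ∀ r, G r = ∫ ρ in R₂..r, f ρ * ρ ^ (n - 1)) :
    ∀ r ∈ Set.Ioo R₂ R₁,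
      r ^ (n - 1) * (nu * ((deriv u r) ^ 2 / 2 - lam) * deriv u r) = -G r ∧
      HasDerivAt (fun s => s ^ (n - 1) * (nu * ((deriv u s) ^ 2 / 2 - lam) * deriv u s))
        (-(f r * r ^ (n - 1))) r := by
  exact fun r hr => (stmt_19_general n hn R₁ R₂ hR₂ lam nu hnu.ne' f
    (hf.intervalIntegrable_of_Icc hR.le) F hF ζ hζc hζ0 hdae C u hu G hG r hr).imp_right
      fun h => h (hf.continuousAt (Icc_mem_nhds hr.1 hr.2))
end
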